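/- Let K be an algebraically closed field, Δ a simplicial complex on the vertex set X = {x_1,...,x_n}, F a face of Δ with F ≠ X, and Δ' = Δ ∪ co_{x_0}F. If I_Δ is a set-theoretic complete intersection, then ara I_{Δ'} = max(ara I_Δ + 1, n − |F|). -/

import Mathlib

open MvPolynomial

section Core

variable {V : Type*} [DecidableEq V]

/-- `Δ` is a simplicial complex on the vertex set `V`: every singleton is a face
and faces are closed under taking subsets. -/
def IsSimplicialComplex (Δ : Set (Finset V)) : Prop :=
  (∀ v : V, ({v} : Finset V) ∈ Δ) ∧ ∀ F ∈ Δ, ∀ G ⊆ F, G ∈ Δ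

/-- The Stanley-Reisner ideal of `Δ` over `K`: generated by the squarefree monomials
whose support is not a face of `Δ`. -/
noncomputable def srIdeal (K : Type*) [Field K] (Δ : Set (Finset V)) :
    Ideal (MvPolynomial V K) :=
  Ideal.span ((fun S : Finset V => ∏ v ∈ S, (X v : MvPolynomial V K)) '' {S | S ∉ Δ})

/-- The simplicial complex `Δ ∪ co_{x₀} F` on the vertex set `V ∪ {x₀}`,
realized as `Option V` with `none` playing the role of the new vertex `x₀`. -/
def coneUnion (Δ : Set (Finset V)) (F : Finset V) : Set (Finset (Option V)) :=
  ((fun G : Finset V => G.map Function.Embedding.some) '' Δ) ∪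
    {G : Finset (Option V) | G ⊆ insert none (F.map Function.Embedding.some)}

/-- A facet is a maximal face. -/
def IsFacet (Δ : Set (Finset V)) (F : Finset V) : Prop :=
  F ∈ Δ ∧ ∀ G ∈ Δ, F ⊆ G → F = G

/-- The prime ideal `P_F` generated by the variables not in `F`. -/
noncomputable def facePrime (K : Type*) [Field K] (F : Finset V) :
    Ideal (MvPolynomial V K) :=
  Ideal.span ((fun v : V => (X v : MvPolynomial V K)) '' {v : V | v ∉ F})

/-- The dimension of a simplicial complex. -/
noncomputable def scDim (Δ : Set (Finset V)) : ℕ := sSup (Finset.card '' Δ) - 1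

/-- A subfacet of a (pure) complex: a face whose cardinality equals the dimension. -/
noncomputable def IsSubfacet (Δ : Set (Finset V)) (F : Finset V) : Prop :=
  F ∈ Δ ∧ F.card = scDim Δ

end Core

/-- The arithmetical rank of an ideal: the least number of elements generating it
up to radical. -/
noncomputable def ara {R : Type*} [CommRing R] (I : Ideal R) : ℕ :=
  sInf {s : ℕ | ∃ a : Fin s → R, (Ideal.span (Set.range a)).radical = I.radical}

/-- The height of an ideal: the infimum of the heights of the primes containing it. -/
noncomputable def idealHeight {R : Type*} [CommRing R] (I : Ideal R) : ℕ∞ :=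
  ⨅ p : {p : PrimeSpectrum R // I ≤ p.asIdeal}, Order.height p.1

/-!
The lower bounds are instances of Krull's height theorem: every facet `G` of a complex on `n`
vertices gives a minimal prime `P_G` of height `n - |G|`. For `I_Δ` a set-theoretic complete
intersection with `h = ara I_Δ`, this forces `|G| = n - h` for all facets `G` of `Δ`.

For the upper bound, pick a facet `G ⊇ F` and let `a = (a_1, …, a_h)` generate `I_Δ` up to radical.
The column `y` of the `h` variables outside `G` generates `P_G ⊇ I_Δ`, so `a = A y` for a square
matrix `A`. The matrix `D = x_0 + diag(a) A` satisfies `D y = (a_i ^ 2 + x_0 y_i)_i` and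
`det D ≡ x_0 ^ h` modulo `a`. Let `z_j` be the variables in `G \ F`, or the single element `0` if
`G = F`. The elements `a_i ^ 2 + x_0 y_i` and `x_0 z_j det D - (det D - x_0 ^ h)` generate `I_Δ'` up
to radical. Indeed, at a common zero with `det D ≠ 0`, Cramer's rule gives `y = 0`, hence `a = 0`,
`det D = x_0 ^ h` and `x_0 z_j = 0`; at a common zero with `det D = 0`, first `x_0 = 0` and then
`a = 0`.
-/

section Radical

variable {R S : Type*} [CommRing R] [CommRing S]

lemma radical_eq_radical_of_forall_isPrime {I J : Ideal R}
    (h : ∀ Q : Ideal R, Q.IsPrime → (I ≤ Q ↔ J ≤ Q)) : I.radical = J.radical :=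
  PrimeSpectrum.zeroLocus_eq_iff.1 <| Set.ext fun Q ↦ h Q.asIdeal Q.isPrime

lemma radical_map_eq_radical_map (f : R →+* S) {I J : Ideal R} (h : I.radical = J.radical) :
    (I.map f).radical = (J.map f).radical := by
  refine radical_eq_radical_of_forall_isPrime fun Q hQ ↦ ?_
  have hQf : (Q.comap f).IsPrime := hQ.comap f
  rw [Ideal.map_le_iff_le_comap, Ideal.map_le_iff_le_comap, ← hQf.radical_le_iff, h,
    hQf.radical_le_iff]

end Radical

section ArithmeticalRank

variable {R S ι : Type*} [CommRing R] [CommRing S] [Fintype ι]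

lemma ara_le_card {I : Ideal R} (a : ι → R) (h : (Ideal.span (Set.range a)).radical = I.radical) :
    ara I ≤ Fintype.card ι := by
  refine Nat.sInf_le ⟨a ∘ (Fintype.equivFin ι).symm, ?_⟩
  rwa [(Fintype.equivFin ι).symm.surjective.range_comp]

variable [IsNoetherianRing R]

lemma exists_radical_span_range_eq (I : Ideal R) :
    ∃ a : Fin (ara I) → R, (Ideal.span (Set.range a)).radical = I.radical := by
  obtain ⟨n, a, ha⟩ :=
    Submodule.fg_iff_exists_fin_generating_family.1 (IsNoetherian.noetherian I)
  have hne : {s : ℕ | ∃ a : Fin s → R,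
      (Ideal.span (Set.range a)).radical = I.radical}.Nonempty :=
    ⟨n, a, congrArg Ideal.radical ha⟩
  exact Nat.sInf_mem hne

lemma exists_radical_span_range_eq_of_ara_le {I : Ideal R} (h : ara I ≤ Fintype.card ι) :
    ∃ a : ι → R, (Ideal.span (Set.range a)).radical = I.radical := by
  obtain ⟨a, ha⟩ := exists_radical_span_range_eq I
  obtain ⟨e⟩ : Nonempty (Fin (ara I) ↪ ι) :=
    Function.Embedding.nonempty_of_card_le (by rwa [Fintype.card_fin])
  refine ⟨Function.extend e a 0, ?_⟩
  rw [← ha]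
  congr 1
  refine le_antisymm (Ideal.span_le.2 ?_) (Ideal.span_mono ?_)
  · rintro _ ⟨i, rfl⟩
    by_cases hi : ∃ k, e k = i
    · obtain ⟨k, rfl⟩ := hi
      rw [e.injective.extend_apply]
      exact Ideal.subset_span ⟨k, rfl⟩
    · rw [Function.extend_apply' _ _ _ hi]
      exact Ideal.zero_mem _
  · rintro _ ⟨k, rfl⟩
    exact ⟨e k, e.injective.extend_apply a 0 k⟩

lemma ara_map_le (f : R →+* S) (I : Ideal R) : ara (I.map f) ≤ ara I := by
  obtain ⟨a, ha⟩ := exists_radical_span_range_eq I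
  have hfa : (Ideal.span (Set.range (f ∘ a))).radical = (I.map f).radical := by
    rw [Set.range_comp, ← Ideal.map_span]
    exact radical_map_eq_radical_map f ha
  simpa only [Fintype.card_fin] using ara_le_card (f ∘ a) hfa

lemma height_le_ara_of_mem_minimalPrimes {I P : Ideal R} (hP : P ∈ I.minimalPrimes) :
    P.height ≤ ara I := by
  obtain ⟨a, ha⟩ := exists_radical_span_range_eq I
  rw [← Ideal.radical_minimalPrimes, ← ha, Ideal.radical_minimalPrimes] at hP
  refine (Ideal.height_le_card_of_mem_minimalPrimes_span (Set.finite_range a) hP).trans ?_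
  rw [← Set.image_univ]
  exact_mod_cast (Set.ncard_image_le Set.finite_univ).trans_eq (by simp [Set.ncard_univ])

end ArithmeticalRank

lemma idealHeight_le_height {R : Type*} [CommRing R] {I P : Ideal R} [hP : P.IsPrime]
    (h : I ≤ P) : idealHeight I ≤ P.height := by
  rw [PrimeSpectrum.height_eq_orderHeight ⟨P, hP⟩]
  exact iInf_le (fun p : {p : PrimeSpectrum R // I ≤ p.asIdeal} ↦ Order.height p.1) ⟨⟨P, hP⟩, h⟩

section ConeGenerators

open Matrix

variable {R m p : Type*} [CommRing R] [Fintype m] [DecidableEq m]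

lemma det_mul_mem_of_mulVec_mem {I : Ideal R} (D : Matrix m m R) {y : m → R}
    (h : ∀ i, (D *ᵥ y) i ∈ I) (i : m) : D.det * y i ∈ I := by
  have cramer : D.adjugate *ᵥ (D *ᵥ y) = D.det • y := by
    rw [mulVec_mulVec, adjugate_mul, smul_mulVec, one_mulVec]
  rw [← smul_eq_mul, ← Pi.smul_apply, ← cramer]
  exact Ideal.sum_mem _ fun k _ ↦ Ideal.mul_mem_left _ _ (h k)

/-- The matrix `D = x + diag(a) A` of the construction: if `A y = a` then `D y` has the entries
`a_i ^ 2 + x y_i`. The factor `diag(a)` makes `det D` congruent to a power of `x` modulo `a`. -/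
def coneMatrix (x : R) (a : m → R) (A : Matrix m m R) : Matrix m m R :=
  scalar m x + diagonal a * A

lemma coneMatrix_mulVec_apply (x : R) {a y : m → R} {A : Matrix m m R} (hA : A *ᵥ y = a) (i : m) :
    (coneMatrix x a A *ᵥ y) i = a i ^ 2 + x * y i := by
  rw [coneMatrix, add_mulVec, ← mulVec_mulVec, hA, scalar_apply, Pi.add_apply, mulVec_diagonal,
    mulVec_diagonal]
  ring

lemma det_coneMatrix_sub_pow_mem (x : R) (a : m → R) (A : Matrix m m R) :
    (coneMatrix x a A).det - x ^ Fintype.card m ∈ Ideal.span (Set.range a) := by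
  set π := Ideal.Quotient.mk (Ideal.span (Set.range a))
  have ha : (fun i ↦ π (a i)) = 0 :=
    funext fun i ↦ Ideal.Quotient.eq_zero_iff_mem.2 (Ideal.subset_span ⟨i, rfl⟩)
  have hD : π.mapMatrix (coneMatrix x a A) = scalar m (π x) := by
    rw [coneMatrix, map_add, map_mul, RingHom.mapMatrix_apply, RingHom.mapMatrix_apply,
      scalar_apply, scalar_apply, diagonal_map (map_zero π), diagonal_map (map_zero π), ha,
      diagonal_zero', zero_mul, add_zero]
  refine Ideal.Quotient.eq.1 (?_ : π _ = π _)
  rw [RingHom.map_det, hD, map_pow, scalar_apply, det_diagonal, Finset.prod_const,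
    Finset.card_univ]

/-- Generators up to radical of `(a) + x (y, z)`, where `a = A y`; see
`radical_span_coneGenerators`. -/
def coneGenerators (x : R) (a y : m → R) (A : Matrix m m R) (z : p → R) : m ⊕ p → R :=
  let d := (coneMatrix x a A).det
  Sum.elim (fun i ↦ a i ^ 2 + x * y i) (fun j ↦ x * z j * d - (d - x ^ Fintype.card m))

lemma span_singleton_mul_sup_le_iff {ι κ : Type*} {x : R} {y : ι → R} {z : κ → R} {Q : Ideal R} :
    Ideal.span {x} * (Ideal.span (Set.range y) ⊔ Ideal.span (Set.range z)) ≤ Q ↔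
      (∀ i, x * y i ∈ Q) ∧ ∀ j, x * z j ∈ Q := by
  simp [Ideal.mul_sup, Ideal.span_mul_span', Ideal.span_le, Set.range_subset_iff,
    Set.singleton_mul, Set.image_subset_iff]

lemma coneGenerators_mem {x : R} {a y : m → R} {A : Matrix m m R} {z : p → R} {Q : Ideal R}
    (ha : Ideal.span (Set.range a) ≤ Q) (hy : ∀ i, x * y i ∈ Q) (hz : ∀ j, x * z j ∈ Q)
    (k : m ⊕ p) : coneGenerators x a y A z k ∈ Q := by
  rcases k with i | j
  · exact Q.add_mem (Q.pow_mem_of_mem (ha (Ideal.subset_span ⟨i, rfl⟩)) 2 two_pos) (hy i)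
  · exact Q.sub_mem (Q.mul_mem_right _ (hz j)) (ha (det_coneMatrix_sub_pow_mem x a A))

lemma mem_of_coneGenerators_mem_of_det_mem [Nonempty p] {x : R} {a y : m → R} {A : Matrix m m R}
    {z : p → R} {Q : Ideal R} (hQ : Q.IsPrime) (h : ∀ k, coneGenerators x a y A z k ∈ Q)
    (hd : (coneMatrix x a A).det ∈ Q) : x ∈ Q ∧ ∀ i, a i ∈ Q := by
  obtain ⟨j⟩ := ‹Nonempty p›
  have hdiff : (coneMatrix x a A).det - x ^ Fintype.card m ∈ Q :=
    (Q.sub_mem_iff_right (Q.mul_mem_left (x * z j) hd)).1 (h (Sum.inr j))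
  have hx : x ∈ Q := hQ.mem_of_pow_mem _ ((Q.sub_mem_iff_right hd).1 hdiff)
  exact ⟨hx, fun i ↦ hQ.mem_of_pow_mem 2
    ((Q.add_mem_iff_left (Q.mul_mem_right (y i) hx)).1 (h (Sum.inl i)))⟩

lemma mem_of_coneGenerators_mem_of_det_notMem {x : R} {a y : m → R} {A : Matrix m m R} {z : p → R}
    (hA : A *ᵥ y = a) {Q : Ideal R} (hQ : Q.IsPrime) (h : ∀ k, coneGenerators x a y A z k ∈ Q)
    (hd : (coneMatrix x a A).det ∉ Q) :
    (∀ i, y i ∈ Q) ∧ (∀ i, a i ∈ Q) ∧ ∀ j, x * z j ∈ Q := by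
  have hDy (i : m) : (coneMatrix x a A *ᵥ y) i ∈ Q := by
    rw [coneMatrix_mulVec_apply x hA]
    exact h (Sum.inl i)
  have hy (i : m) : y i ∈ Q :=
    (hQ.mem_or_mem (det_mul_mem_of_mulVec_mem _ hDy i)).resolve_left hd
  have ha (i : m) : a i ∈ Q := by
    rw [← hA]
    exact Q.sum_mem fun k _ ↦ Q.mul_mem_left _ (hy k)
  have hdiff : (coneMatrix x a A).det - x ^ Fintype.card m ∈ Q :=
    Ideal.span_le.2 (Set.range_subset_iff.2 ha) (det_coneMatrix_sub_pow_mem x a A)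
  exact ⟨hy, ha, fun j ↦
    (hQ.mem_or_mem ((Q.sub_mem_iff_left hdiff).1 (h (Sum.inr j)))).resolve_right hd⟩

lemma radical_span_coneGenerators [Nonempty p] (x : R) {a y : m → R} {A : Matrix m m R}
    (hA : A *ᵥ y = a) (z : p → R) :
    (Ideal.span (Set.range (coneGenerators x a y A z))).radical =
      (Ideal.span (Set.range a) ⊔
        Ideal.span {x} * (Ideal.span (Set.range y) ⊔ Ideal.span (Set.range z))).radical := by
  refine radical_eq_radical_of_forall_isPrime fun Q hQ ↦ ?_
  rw [sup_le_iff, span_singleton_mul_sup_le_iff, Ideal.span_le, Set.range_subset_iff]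
  constructor
  · intro h
    rw [Ideal.span_le, Set.range_subset_iff]
    by_cases hd : (coneMatrix x a A).det ∈ Q
    · obtain ⟨hx, ha⟩ := mem_of_coneGenerators_mem_of_det_mem hQ h hd
      exact ⟨ha, fun i ↦ Q.mul_mem_right _ hx, fun j ↦ Q.mul_mem_right _ hx⟩
    · obtain ⟨hy, ha, hz⟩ := mem_of_coneGenerators_mem_of_det_notMem hA hQ h hd
      exact ⟨ha, fun i ↦ Q.mul_mem_left _ (hy i), hz⟩
  · rintro ⟨ha, hy, hz⟩
    exact coneGenerators_mem ha hy hz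

end ConeGenerators

section AraBound

variable {R m p : Type*} [CommRing R] [IsNoetherianRing R] [Fintype m] [Fintype p]
  {I : Ideal R} {y : m → R}

lemma ara_sup_span_singleton_mul_le_of_nonempty [Nonempty p]
    (hI : I.radical ≤ Ideal.span (Set.range y)) (hm : ara I ≤ Fintype.card m) (x : R) (z : p → R) :
    ara (I ⊔ Ideal.span {x} * (Ideal.span (Set.range y) ⊔ Ideal.span (Set.range z))) ≤
      Fintype.card m + Fintype.card p := by
  classical
  obtain ⟨a, ha⟩ := exists_radical_span_range_eq_of_ara_le hm
  have hay (i : m) : a i ∈ Ideal.span (Set.range y) :=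
    hI (ha ▸ Ideal.le_radical (Ideal.subset_span ⟨i, rfl⟩))
  choose A hA using fun i ↦ Ideal.mem_span_range_iff_exists_fun.1 (hay i)
  have hgen := radical_span_coneGenerators x (A := Matrix.of A) (funext hA) z
  rw [← Fintype.card_sum]
  refine ara_le_card _ (hgen.trans ?_)
  rw [Ideal.radical_sup, ha, ← Ideal.radical_sup]

lemma ara_sup_span_singleton_mul_le
    (hI : I.radical ≤ Ideal.span (Set.range y)) (hm : ara I ≤ Fintype.card m) (x : R) (z : p → R) :
    ara (I ⊔ Ideal.span {x} * (Ideal.span (Set.range y) ⊔ Ideal.span (Set.range z))) ≤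
      Fintype.card m + max 1 (Fintype.card p) := by
  cases isEmpty_or_nonempty p
  · simpa [Set.range_eq_empty z] using
      ara_sup_span_singleton_mul_le_of_nonempty hI hm x (fun _ : Unit ↦ 0)
  · exact (ara_sup_span_singleton_mul_le_of_nonempty hI hm x z).trans
      (Nat.add_le_add_left (le_max_right _ _) _)

end AraBound

lemma sub_aeval_mem {σ R : Type*} [CommRing R] {I : Ideal (MvPolynomial σ R)}
    {f : σ → MvPolynomial σ R} (h : ∀ v, X v - f v ∈ I) (q : MvPolynomial σ R) :
    q - aeval f q ∈ I := by
  have hcomp : (Ideal.Quotient.mkₐ R I).comp (aeval f) = Ideal.Quotient.mkₐ R I :=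
    algHom_ext fun v ↦ by simpa using (Ideal.Quotient.eq.2 (h v)).symm
  exact Ideal.Quotient.eq.1 (DFunLike.congr_fun hcomp q).symm

section FacePrime

variable {V : Type*} (K : Type*) [Field K]

lemma facePrime_eq_ker [DecidableEq V] (F : Finset V) :
    facePrime K F =
      RingHom.ker (aeval (R := K) fun v ↦ if v ∈ F then (X v : MvPolynomial V K) else 0) := by
  refine le_antisymm (Ideal.span_le.2 ?_) fun q hq ↦ ?_
  · rintro _ ⟨v, hv, rfl⟩
    exact (aeval_X _ v).trans (if_neg hv)
  · rw [RingHom.mem_ker] at hq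
    rw [← sub_zero q, ← hq]
    refine sub_aeval_mem (fun v ↦ ?_) q
    split_ifs with hv
    · simp
    · rw [sub_zero]
      exact Ideal.subset_span ⟨v, hv, rfl⟩

instance facePrime_isPrime (F : Finset V) : (facePrime K F).IsPrime := by
  classical
  rw [facePrime_eq_ker]
  exact RingHom.ker_isPrime _

variable {K}

lemma X_mem_facePrime {F : Finset V} {v : V} :
    (X v : MvPolynomial V K) ∈ facePrime K F ↔ v ∉ F := by
  classical
  simp [facePrime_eq_ker, RingHom.mem_ker]

lemma prod_X_mem_facePrime {F S : Finset V} :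
    (∏ v ∈ S, (X v : MvPolynomial V K)) ∈ facePrime K F ↔ ¬ S ⊆ F := by
  simp [Ideal.IsPrime.prod_mem_iff, Finset.not_subset, X_mem_facePrime]

lemma facePrime_le_iff {F : Finset V} {I : Ideal (MvPolynomial V K)} :
    facePrime K F ≤ I ↔ ∀ v ∉ F, X v ∈ I := by
  simp [facePrime, Ideal.span_le, Set.subset_def]

variable (K)

lemma facePrime_strictAnti : StrictAnti (facePrime (V := V) K) := fun F G hFG ↦ by
  obtain ⟨v, hvG, hvF⟩ := Finset.exists_of_ssubset hFG
  refine SetLike.lt_iff_le_and_exists.2 ⟨facePrime_le_iff.2 fun w hw ↦ ?_, X v, ?_, ?_⟩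
  · exact X_mem_facePrime.2 fun h ↦ hw (hFG.subset h)
  · exact X_mem_facePrime.2 hvF
  · exact fun h ↦ X_mem_facePrime.1 h hvG

lemma facePrime_eq_span_range (F : Finset V) :
    facePrime K F = Ideal.span (Set.range fun v : {v // v ∉ F} ↦ X v.1) := by
  rw [facePrime, Set.image_eq_range]
  rfl

lemma card_le_orderHeight (S : Finset V) : (S.card : ℕ∞) ≤ Order.height S := by
  classical
  induction S using Finset.induction_on with
  | empty => simp
  | insert v S hv ih =>
    rw [Finset.card_insert_of_notMem hv, Nat.cast_add, Nat.cast_one]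
    exact (add_le_add_left ih 1).trans (Order.height_add_one_le (Finset.ssubset_insert hv))

variable [DecidableEq V]

lemma facePrime_eq_sup {F G : Finset V} (hFG : F ⊆ G) :
    facePrime K F =
      facePrime K G ⊔ Ideal.span (Set.range fun v : ↥(G \ F) ↦ (X v.1 : MvPolynomial V K)) := by
  have hcompl : {v | v ∉ F} = {v | v ∉ G} ∪ {v | v ∈ G \ F} := by
    ext v
    have := @hFG v
    simp only [Set.mem_ofPred_eq, Set.mem_union, Finset.mem_sdiff]
    tauto
  rw [facePrime, hcompl, Set.image_union, Ideal.span_union, Set.image_eq_range _ {v | v ∈ G \ F}]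
  rfl

variable [Fintype V]

lemma card_notMem_eq_card_compl (F : Finset V) : Fintype.card {v // v ∉ F} = Fᶜ.card := by
  rw [Fintype.card_subtype_compl, Fintype.card_coe, Finset.card_compl]

lemma ara_sup_span_singleton_mul_facePrime_le {I : Ideal (MvPolynomial V K)} {F G : Finset V}
    (hFG : F ⊆ G) (hI : I ≤ facePrime K G) (hG : ara I ≤ Gᶜ.card) (x : MvPolynomial V K) :
    ara (I ⊔ Ideal.span {x} * facePrime K F) ≤ Gᶜ.card + max 1 (G \ F).card := by
  rw [← (facePrime_isPrime K G).radical_le_iff, facePrime_eq_span_range] at hI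
  rw [← card_notMem_eq_card_compl] at hG ⊢
  rw [facePrime_eq_sup K hFG, facePrime_eq_span_range K G]
  simpa only [Fintype.card_coe] using ara_sup_span_singleton_mul_le hI hG x
    fun v : ↥(G \ F) ↦ (X v.1 : MvPolynomial V K)

lemma card_compl_le_height_facePrime (F : Finset V) :
    (Fᶜ.card : ℕ∞) ≤ (facePrime K F).height := by
  let P (S : Finset V) : PrimeSpectrum (MvPolynomial V K) := ⟨facePrime K Sᶜ, inferInstance⟩
  have hP : StrictMono P := fun S T hST ↦ facePrime_strictAnti K (compl_lt_compl_iff_lt.2 hST)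
  have hPF : (facePrime K F).height = Order.height (P Fᶜ) := by
    rw [← PrimeSpectrum.height_eq_orderHeight]
    simp only [P, compl_compl]
  rw [hPF]
  exact (card_le_orderHeight Fᶜ).trans (Order.height_le_height_apply_of_strictMono P hP Fᶜ)

lemma height_facePrime_le_card_compl (F : Finset V) :
    (facePrime K F).height ≤ Fᶜ.card := by
  have hmin : facePrime K F ∈ (facePrime K F).minimalPrimes := by
    simp [Ideal.minimalPrimes_eq_subsingleton_self]
  have hara : ara (facePrime K F) ≤ Fᶜ.card := by
    rw [← card_notMem_eq_card_compl]
    exact ara_le_card _ (congrArg Ideal.radical (facePrime_eq_span_range K F).symm)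
  exact (height_le_ara_of_mem_minimalPrimes hmin).trans (by exact_mod_cast hara)

end FacePrime

section StanleyReisner

variable {V : Type*} {Δ : Set (Finset V)}

lemma IsSimplicialComplex.isLowerSet (hΔ : IsSimplicialComplex Δ) : IsLowerSet Δ :=
  fun F G hGF hF ↦ hΔ.2 F hF G hGF

lemma exists_isFacet_superset [Finite V] {F : Finset V} (hF : F ∈ Δ) :
    ∃ G, IsFacet Δ G ∧ F ⊆ G := by
  obtain ⟨G, hFG, hG⟩ := Δ.toFinite.exists_le_maximal hF
  exact ⟨G, ⟨hG.prop, fun H hH hGH ↦ hG.eq_of_le hH hGH⟩, hFG⟩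

variable (K : Type*) [Field K]

lemma prod_X_mem_srIdeal {S : Finset V} (hS : S ∉ Δ) :
    (∏ v ∈ S, (X v : MvPolynomial V K)) ∈ srIdeal K Δ :=
  Ideal.subset_span ⟨S, hS, rfl⟩

lemma srIdeal_le_facePrime (hΔ : IsLowerSet Δ) {G : Finset V} (hG : G ∈ Δ) :
    srIdeal K Δ ≤ facePrime K G := by
  rw [srIdeal, Ideal.span_le]
  rintro _ ⟨S, hS, rfl⟩
  exact prod_X_mem_facePrime.2 fun hSG ↦ hS (hΔ hSG hG)

lemma IsFacet.facePrime_mem_minimalPrimes (hΔ : IsLowerSet Δ) {G : Finset V} (hG : IsFacet Δ G) :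
    facePrime K G ∈ (srIdeal K Δ).minimalPrimes := by
  classical
  refine ⟨⟨inferInstance, srIdeal_le_facePrime K hΔ hG.1⟩, ?_⟩
  rintro Q ⟨hQ, hIQ⟩ hQG
  refine facePrime_le_iff.2 fun v hv ↦ ?_
  have hnonface : insert v G ∉ Δ := fun h ↦
    hv (hG.2 _ h (Finset.subset_insert v G) ▸ Finset.mem_insert_self v G)
  obtain ⟨w, hw, hwQ⟩ := hQ.prod_mem_iff.1 (hIQ (prod_X_mem_srIdeal K hnonface))
  have hwG : w ∉ G := X_mem_facePrime.1 (hQG hwQ)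
  rwa [← (Finset.mem_insert.1 hw).resolve_right hwG]

variable [Fintype V] [DecidableEq V]

lemma IsFacet.card_compl_le_ara (hΔ : IsLowerSet Δ) {G : Finset V} (hG : IsFacet Δ G) :
    Gᶜ.card ≤ ara (srIdeal K Δ) := by
  exact_mod_cast (card_compl_le_height_facePrime K G).trans
    (height_le_ara_of_mem_minimalPrimes (hG.facePrime_mem_minimalPrimes K hΔ))

lemma ara_srIdeal_le_card_compl (hΔ : IsLowerSet Δ)
    (hstci : (ara (srIdeal K Δ) : ℕ∞) = idealHeight (srIdeal K Δ)) {G : Finset V} (hG : G ∈ Δ) :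
    ara (srIdeal K Δ) ≤ Gᶜ.card := by
  have hheight := idealHeight_le_height (srIdeal_le_facePrime K hΔ hG)
  rw [← hstci] at hheight
  exact_mod_cast hheight.trans (height_facePrime_le_card_compl K G)

end StanleyReisner

section ConeUnion

open Finset (insertNone eraseNone)

variable {V : Type*} {Δ : Set (Finset V)} {F G : Finset V}

lemma map_some_subset_insertNone_iff : G.map .some ⊆ insertNone F ↔ G ⊆ F := by
  simp [Finset.subset_iff]

variable [DecidableEq V]

lemma mem_coneUnion {S : Finset (Option V)} :
    S ∈ coneUnion Δ F ↔ (∃ G ∈ Δ, G.map .some = S) ∨ S ⊆ insertNone F := by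
  have hcone : insertNone F = insert none (F.map .some) := by
    ext (_ | v) <;> simp
  rw [hcone]
  rfl

lemma isLowerSet_coneUnion (hΔ : IsLowerSet Δ) (F : Finset V) : IsLowerSet (coneUnion Δ F) := by
  intro S T hTS hS
  rw [mem_coneUnion] at hS ⊢
  rcases hS with ⟨G, hG, rfl⟩ | hS
  · obtain ⟨H, hHG, rfl⟩ := Finset.subset_map_iff.1 hTS
    exact Or.inl ⟨H, hΔ hHG hG, rfl⟩
  · exact Or.inr (hTS.trans hS)

lemma mem_coneUnion_of_none_mem {S : Finset (Option V)} (hS : none ∈ S) :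
    S ∈ coneUnion Δ F ↔ S ⊆ insertNone F := by
  rw [mem_coneUnion, or_iff_right]
  rintro ⟨G, -, rfl⟩
  simp at hS

lemma map_some_mem_coneUnion_iff (hΔ : IsLowerSet Δ) (hF : F ∈ Δ) :
    G.map .some ∈ coneUnion Δ F ↔ G ∈ Δ := by
  rw [mem_coneUnion, map_some_subset_insertNone_iff]
  simp only [Finset.map_inj, exists_eq_right, or_iff_left_iff_imp]
  exact fun hGF ↦ hΔ hGF hF

lemma isFacet_insertNone (Δ : Set (Finset V)) (F : Finset V) :
    IsFacet (coneUnion Δ F) (insertNone F) := by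
  refine ⟨mem_coneUnion.2 (Or.inr subset_rfl), fun S hS hFS ↦ hFS.antisymm ?_⟩
  exact (mem_coneUnion_of_none_mem (hFS Finset.none_mem_insertNone)).1 hS

lemma IsFacet.map_some (hG : IsFacet Δ G) (hGF : ¬ G ⊆ F) :
    IsFacet (coneUnion Δ F) (G.map .some) := by
  refine ⟨mem_coneUnion.2 (Or.inl ⟨G, hG.1, rfl⟩), fun S hS hGS ↦ ?_⟩
  rcases mem_coneUnion.1 hS with ⟨H, hH, rfl⟩ | hSF
  · rw [hG.2 H hH (Finset.map_subset_map.1 hGS)]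
  · exact absurd (map_some_subset_insertNone_iff.1 (hGS.trans hSF)) hGF

variable (K : Type*) [Field K]

lemma prod_X_mem_of_notMem_coneUnion {S : Finset (Option V)} (hS : S ∉ coneUnion Δ F) :
    (∏ v ∈ S, (X v : MvPolynomial (Option V) K)) ∈
      (srIdeal K Δ).map (rename some) ⊔ Ideal.span {X none} * facePrime K (insertNone F) := by
  by_cases hnone : none ∈ S
  · rw [mem_coneUnion_of_none_mem hnone, ← Finset.insert_eq_of_mem Finset.none_mem_insertNone,
      Finset.subset_insert_iff] at hS
    rw [← Finset.mul_prod_erase S _ hnone]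
    exact Ideal.mem_sup_right (Ideal.mul_mem_mul (Ideal.mem_span_singleton_self _)
      (prod_X_mem_facePrime.2 hS))
  · have hmap : (eraseNone S).map .some = S := by
      rw [Finset.map_some_eraseNone, Finset.erase_eq_of_notMem hnone]
    have hΔS : eraseNone S ∉ Δ := fun h ↦ hS (mem_coneUnion.2 (Or.inl ⟨_, h, hmap⟩))
    have hmem := Ideal.mem_map_of_mem (rename (R := K) some) (prod_X_mem_srIdeal K hΔS)
    refine Ideal.mem_sup_left ?_
    rw [← hmap, Finset.prod_map]
    simpa only [map_prod, rename_X, Function.Embedding.some_apply] using hmem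

lemma map_rename_srIdeal_le (hΔ : IsLowerSet Δ) (hF : F ∈ Δ) :
    (srIdeal K Δ).map (rename some) ≤ srIdeal K (coneUnion Δ F) := by
  rw [srIdeal, Ideal.map_span, Ideal.span_le]
  rintro _ ⟨_, ⟨S, hS, rfl⟩, rfl⟩
  simpa using prod_X_mem_srIdeal K fun h ↦ hS ((map_some_mem_coneUnion_iff hΔ hF).1 h)

lemma span_X_none_mul_facePrime_le (Δ : Set (Finset V)) (F : Finset V) :
    Ideal.span {X none} * facePrime K (insertNone F) ≤ srIdeal K (coneUnion Δ F) := by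
  rw [facePrime, Ideal.span_mul_span', Set.singleton_mul, Ideal.span_le]
  rintro _ ⟨_, ⟨v, hv, rfl⟩, rfl⟩
  have hne : none ≠ v := fun h ↦ hv (h ▸ Finset.none_mem_insertNone)
  have hnonface : {none, v} ∉ coneUnion Δ F := by
    rw [mem_coneUnion_of_none_mem (Finset.mem_insert_self _ _)]
    exact fun h ↦ hv (h (by simp))
  simpa [Finset.prod_pair hne] using prod_X_mem_srIdeal K hnonface

lemma srIdeal_coneUnion (hΔ : IsLowerSet Δ) (hF : F ∈ Δ) :
    srIdeal K (coneUnion Δ F) =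
      (srIdeal K Δ).map (rename some) ⊔ Ideal.span {X none} * facePrime K (insertNone F) := by
  refine le_antisymm (Ideal.span_le.2 ?_)
    (sup_le (map_rename_srIdeal_le K hΔ hF) (span_X_none_mul_facePrime_le K Δ F))
  rintro _ ⟨S, hS, rfl⟩
  exact prod_X_mem_of_notMem_coneUnion K hS

variable [Fintype V]

lemma card_compl_insertNone (F : Finset V) : (insertNone F)ᶜ.card = Fᶜ.card := by
  simp [Finset.card_compl]

lemma card_compl_le_ara_coneUnion (hΔ : IsLowerSet Δ) (F : Finset V) :
    Fᶜ.card ≤ ara (srIdeal K (coneUnion Δ F)) := by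
  rw [← card_compl_insertNone]
  exact (isFacet_insertNone Δ F).card_compl_le_ara K (isLowerSet_coneUnion hΔ F)

lemma IsFacet.card_compl_add_one_le_ara_coneUnion (hΔ : IsLowerSet Δ) (hG : IsFacet Δ G)
    (hGF : ¬ G ⊆ F) : Gᶜ.card + 1 ≤ ara (srIdeal K (coneUnion Δ F)) := by
  have hcard : (G.map (.some : V ↪ Option V))ᶜ.card = Gᶜ.card + 1 := by
    rw [Finset.card_compl, Finset.card_map, Fintype.card_option, Finset.card_compl,
      Nat.sub_add_comm G.card_le_univ]
  rw [← hcard]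
  exact (hG.map_some hGF).card_compl_le_ara K (isLowerSet_coneUnion hΔ F)

lemma ara_coneUnion_le (hΔ : IsLowerSet Δ) (hG : G ∈ Δ) (hFG : F ⊆ G)
    (hara : ara (srIdeal K Δ) ≤ Gᶜ.card) :
    ara (srIdeal K (coneUnion Δ F)) ≤ max (Gᶜ.card + 1) Fᶜ.card := by
  have hle : (srIdeal K Δ).map (rename some) ≤ facePrime K (insertNone G) :=
    (map_rename_srIdeal_le K hΔ hG).trans
      (srIdeal_le_facePrime K (isLowerSet_coneUnion hΔ G) (isFacet_insertNone Δ G).1)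
  have hmap : ara ((srIdeal K Δ).map (rename some)) ≤ (insertNone G)ᶜ.card := by
    rw [card_compl_insertNone]
    exact (ara_map_le _ _).trans hara
  have hFG' : insertNone F ⊆ insertNone G := insertNone.monotone hFG
  rw [srIdeal_coneUnion K hΔ (hΔ hFG hG)]
  calc
    _ ≤ (insertNone G)ᶜ.card + max 1 (insertNone G \ insertNone F).card :=
      ara_sup_span_singleton_mul_facePrime_le K hFG' hle hmap (X none)
    _ = max (Gᶜ.card + 1) Fᶜ.card := by
      have := Finset.card_le_card hFG
      have := G.card_le_univ
      rw [card_compl_insertNone, Finset.card_sdiff_of_subset hFG', Finset.card_insertNone,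
        Finset.card_insertNone, Finset.card_compl, Finset.card_compl]
      omega

end ConeUnion

theorem ara_coneUnion_eq_general {V : Type*} [Fintype V] [DecidableEq V] (K : Type*) [Field K]
    (Δ : Set (Finset V)) (hΔ : IsSimplicialComplex Δ)
    (F : Finset V) (hF : F ∈ Δ) (hFX : F ≠ Finset.univ)
    (hstci : (ara (srIdeal K Δ) : ℕ∞) = idealHeight (srIdeal K Δ)) :
    ara (srIdeal K (coneUnion Δ F)) =
      max (ara (srIdeal K Δ) + 1) (Fintype.card V - F.card) := by
  have hlow := hΔ.isLowerSet
  have hcodim {G : Finset V} (hG : IsFacet Δ G) : ara (srIdeal K Δ) = Gᶜ.card :=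
    (ara_srIdeal_le_card_compl K hlow hstci hG.1).antisymm (hG.card_compl_le_ara K hlow)
  rw [← Finset.card_compl]
  refine le_antisymm ?_ (max_le ?_ (card_compl_le_ara_coneUnion K hlow F))
  · obtain ⟨G, hG, hFG⟩ := exists_isFacet_superset hF
    rw [hcodim hG]
    exact ara_coneUnion_le K hlow hG.1 hFG (hcodim hG).le
  · obtain ⟨v, hv⟩ : ∃ v, v ∉ F := by simpa [Finset.eq_univ_iff_forall] using hFX
    obtain ⟨G, hG, hvG⟩ := exists_isFacet_superset (hΔ.1 v)
    have hGF : ¬ G ⊆ F := fun h ↦ hv (h (hvG (Finset.mem_singleton_self v)))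
    rw [hcodim hG]
    exact hG.card_compl_add_one_le_ara_coneUnion K hlow hGF

/-- for `K` algebraically closed, `F` a face of `Δ` with `F ≠ X`, if `I_Δ` is
a set-theoretic complete intersection then `ara I_{Δ'} = max (ara I_Δ + 1) (n − |F|)`. -/
theorem ara_coneUnion_eq {V : Type*} [Fintype V] [DecidableEq V]
    (K : Type*) [Field K] [IsAlgClosed K]
    (Δ : Set (Finset V)) (hΔ : IsSimplicialComplex Δ)
    (F : Finset V) (hF : F ∈ Δ) (hFX : F ≠ Finset.univ)
    (hstci : (ara (srIdeal K Δ) : ℕ∞) = idealHeight (srIdeal K Δ)) :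
    ara (srIdeal K (coneUnion Δ F)) =
      max (ara (srIdeal K Δ) + 1) (Fintype.card V - F.card) :=
  ara_coneUnion_eq_general K Δ hΔ F hF hFX hstci
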